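/- (Mehler formula extended to the complex plane.) For every real λ with 0 < λ < 1 and all t, z ∈ ℂ, the series ∑_{m=0}^∞ (λ^m/(2^m m!)) H_m(t) H_m(z) converges and equals (1 − λ²)^{−1/2} · exp((−λ²(t² + z²) + 2λtz)/(1 − λ²)). -/

import Mathlib

open MeasureTheory Complex

/-- Physicists' Hermite polynomial `H_m`, as an entire function on `ℂ`:
`H_m(z) = (-1)^m e^{z²} (d/dz)^m e^{-z²}`. -/
noncomputable def Hpoly (m : ℕ) (z : ℂ) : ℂ :=
  (-1 : ℂ) ^ m * Complex.exp (z ^ 2) * iteratedDeriv m (fun w => Complex.exp (-w ^ 2)) z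

lemma gder (n : ℕ) : ∀ z : ℂ, HasDerivAt (iteratedDeriv n (fun w : ℂ => Complex.exp (-w ^ 2)))
    (iteratedDeriv (n+1) (fun w : ℂ => Complex.exp (-w ^ 2)) z) z := by
  intro z
  rw [iteratedDeriv_succ]
  apply DifferentiableAt.hasDerivAt
  have h : ContDiff ℂ (n+1) (fun w : ℂ => Complex.exp (-w ^ 2)) := by fun_prop
  exact (h.differentiable_iteratedDeriv n (by exact_mod_cast Nat.lt_succ_self n)) z

lemma gone (z : ℂ) : iteratedDeriv 1 (fun w : ℂ => Complex.exp (-w ^ 2)) z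
    = -2 * z * Complex.exp (-z^2) := by
  rw [iteratedDeriv_one]
  have : HasDerivAt (fun w : ℂ => Complex.exp (-w ^ 2)) (-2 * z * Complex.exp (-z^2)) z := by
    have := ((hasDerivAt_pow 2 z).neg).cexp
    convert! this using 1
    simp; ring
  exact this.deriv

lemma grec (n : ℕ) : ∀ z : ℂ, iteratedDeriv (n+2) (fun w : ℂ => Complex.exp (-w ^ 2)) z
    = -2 * z * iteratedDeriv (n+1) (fun w : ℂ => Complex.exp (-w ^ 2)) z
      - 2 * (n+1) * iteratedDeriv n (fun w : ℂ => Complex.exp (-w ^ 2)) z := by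
  induction n with
  | zero =>
    intro z
    have h1 := gder 1 z
    have h0 := gder 0 z
    have e : iteratedDeriv 1 (fun w : ℂ => Complex.exp (-w ^ 2)) =
      fun z => -2 * z * iteratedDeriv 0 (fun w : ℂ => Complex.exp (-w ^ 2)) z := by
      funext z; rw [gone]; simp
    rw [e] at h1
    have h2 := ((hasDerivAt_id z).const_mul (-2)).mul h0
    have := h1.unique h2
    simp only [id] at this
    simp only [zero_add] at this ⊢
    rw [this]; push_cast; ring
  | succ n ih =>
    intro z
    have h2 := gder (n+2) z
    have h1 := gder (n+1) z
    have h0 := gder n z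
    rw [funext ih] at h2
    have h3 := (((hasDerivAt_id z).const_mul (-2)).mul h1).sub (h0.const_mul (2 * ((n:ℂ)+1)))
    have := h2.unique h3
    simp only [id] at this
    rw [this]; push_cast; ring

lemma H0 (z : ℂ) : Hpoly 0 z = 1 := by
  simp [Hpoly, ← Complex.exp_add]

lemma H1 (z : ℂ) : Hpoly 1 z = 2 * z := by
  have : Complex.exp (z^2) * Complex.exp (-z^2) = 1 := by simp [← Complex.exp_add]
  rw [Hpoly, gone]
  linear_combination 2 * z * this

lemma Hrec (n : ℕ) (z : ℂ) :
    Hpoly (n+2) z = 2 * z * Hpoly (n+1) z - 2 * (n+1) * Hpoly n z := by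
  simp only [Hpoly, grec]
  ring

def sh (a : ℕ → ℂ) : ℕ → ℂ
  | 0 => 0
  | n+1 => a n

def Ser (f : ℂ → ℂ) (a : ℕ → ℂ) : Prop :=
  ∀ x : ℂ, ‖x‖ < 1 → HasSum (fun n => a n * x ^ n) (f x)

lemma Ser.sh {f a} (h : Ser f a) : Ser (fun x => x * f x) (sh a) := by
  intro x hx
  rw [← hasSum_nat_add_iff' 1]
  have := (h x hx).mul_left x
  simp only [Finset.range_one, Finset.sum_singleton, _root_.sh, zero_mul, sub_zero]
  convert! this using 2
  ring

lemma Ser.add {f g a b} (h : Ser f a) (k : Ser g b) :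
    Ser (fun x => f x + g x) (fun n => a n + b n) := by
  intro x hx
  convert! (h x hx).add (k x hx) using 2
  ring

lemma Ser.mul {f a} (c : ℂ) (h : Ser f a) :
    Ser (fun x => c * f x) (fun n => c * a n) := by
  intro x hx
  convert! (h x hx).mul_left c using 2
  ring

lemma Ser.zero {f a} (h : Ser f a) (hf : ∀ x, ‖x‖ < 1 → f x = 0) : ∀ n, a n = 0 := by
  have h1 : HasFPowerSeriesAt f (FormalMultilinearSeries.ofScalars ℂ a) 0 := by
    rw [hasFPowerSeriesAt_iff]
    filter_upwards [Metric.ball_mem_nhds (0:ℂ) one_pos] with x hx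
    have := h x (by simpa using hx)
    simpa [FormalMultilinearSeries.coeff_ofScalars, mul_comm] using this
  have h2 : HasFPowerSeriesAt (0 : ℂ → ℂ) (FormalMultilinearSeries.ofScalars ℂ a) 0 := by
    apply h1.congr
    filter_upwards [Metric.ball_mem_nhds (0:ℂ) one_pos] with x hx
    exact hf x (by simpa using hx)
  have h3 := h2.eq_zero
  intro n
  have := congrArg (fun p => p.coeff n) h3
  have z : (0 : FormalMultilinearSeries ℂ ℂ ℂ).coeff n = 0 := rfl
  simpa [FormalMultilinearSeries.coeff_ofScalars, z] using this

lemma Ser.taylor {f} (h : DifferentiableOn ℂ f (Metric.ball 0 1)) :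
    Ser f (fun n => iteratedDeriv n f 0 / n.factorial) := by
  intro x hx
  have := Complex.hasSum_taylorSeries_on_ball (r := 1) (c := 0) (f := f) (by simpa using h)
    (z := x) (by simpa using hx)
  convert! this using 2
  simp; ring

def Rec (s p : ℂ) (a : ℕ → ℂ) : Prop := ∀ n, 
   (fun n : ℕ => ((n:ℂ)+1) * a (n+1)) n + (-2) * sh (sh (fun n : ℕ => ((n:ℂ)+1) * a (n+1))) n
   + sh (sh (sh (sh (fun n : ℕ => ((n:ℂ)+1) * a (n+1))))) n
   + (2 * s - 1) * sh a n + sh (sh (sh a)) n + (-2 * p) * a n + (-2*p) * sh (sh a) n = 0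

lemma Rec.unique {s p a b} (ha : Rec s p a) (hb : Rec s p b) (h0 : a 0 = b 0) : ∀ n, a n = b n := by
  intro n
  induction n using Nat.strong_induction_on with
  | _ n ih =>
    have key : ∀ m, (∀ k ≤ m, a k = b k) → ((m:ℂ)+1) * a (m+1) = ((m:ℂ)+1) * b (m+1) := by
      intro m hm
      have h1 := ha m
      have h2 := hb m
      match m with
      | 0 => 
        simp only [sh] at h1 h2
        rw [h0] at h1
        linear_combination h1 - h2
      | 1 => 
        simp only [sh] at h1 h2
        rw [hm 0 (by omega), hm (0+1) (by omega)] at h1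
        linear_combination h1 - h2
      | 2 => 
        simp only [sh] at h1 h2
        rw [hm 0 (by omega), hm (0+1) (by omega), hm (0+1+1) (by omega)] at h1
        linear_combination h1 - h2
      | 3 => 
        simp only [sh] at h1 h2
        rw [hm 0 (by omega), hm (0+1) (by omega), hm (0+1+1) (by omega), hm (0+1+1+1) (by omega)] at h1
        linear_combination h1 - h2
      | m+4 =>
        simp only [sh] at h1 h2
        rw [hm (m+1) (by omega), hm (m+1+1) (by omega), hm (m+1+1+1) (by omega), hm (m+4) (by omega)] at h1
        linear_combination h1 - h2
    match n with
    | 0 => exact h0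
    | n+1 =>
      exact mul_left_cancel₀ (by exact_mod_cast Nat.succ_ne_zero n) (key n (fun k hk => ih k (by omega)))

lemma crec (t z : ℂ) : Rec (t^2+z^2) (t*z)
    (fun m => Hpoly m t * Hpoly m z / ((2:ℂ)^m * m.factorial)) := by
  intro n
  match n with
  | 0 => simp [sh, H0, H1]; ring
  | 1 => simp [sh, H0, H1, Hrec, Nat.factorial]; ring
  | 2 => simp [sh, H0, H1, Hrec, Nat.factorial]; ring
  | 3 => simp [sh, H0, H1, Hrec, Nat.factorial]; ring
  | n+4 =>
    simp only [sh]
    have f0 : ((n+1).factorial : ℂ) ≠ 0 := by exact_mod_cast (n+1).factorial_ne_zero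
    have e2 : ((n+1+1).factorial : ℂ) = (n+2) * (n+1).factorial := by
      rw [Nat.factorial_succ (n+1)]; push_cast; ring
    have e3 : ((n+1+1+1).factorial : ℂ) = (n+3) * ((n+2) * (n+1).factorial) := by
      rw [Nat.factorial_succ (n+2), Nat.cast_mul, e2]; push_cast; ring
    have e4 : ((n+4).factorial : ℂ) = (n+4) * ((n+3) * ((n+2) * (n+1).factorial)) := by
      rw [Nat.factorial_succ (n+3), Nat.cast_mul, e3]; push_cast; ring
    have e5 : ((n+4+1).factorial : ℂ) = (n+5) * ((n+4) * ((n+3) * ((n+2) * (n+1).factorial))) := by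
      rw [Nat.factorial_succ (n+4), Nat.cast_mul, e4]; push_cast; ring
    have n2 : (n:ℂ)+2 ≠ 0 := by exact_mod_cast Nat.succ_ne_zero (n+1)
    have n3 : (n:ℂ)+3 ≠ 0 := by exact_mod_cast Nat.succ_ne_zero (n+2)
    have n4 : (n:ℂ)+4 ≠ 0 := by exact_mod_cast Nat.succ_ne_zero (n+3)
    have n5 : (n:ℂ)+5 ≠ 0 := by exact_mod_cast Nat.succ_ne_zero (n+4)
    rw [e2, e3, e4, e5]
    have r3 := fun w => Hrec (n+1) w
    have r4 := fun w => Hrec (n+2) w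
    have r5 := fun w => Hrec (n+3) w
    simp only [show n+1+1 = n+2 from rfl, show n+1+2 = n+3 from rfl, show n+2+2 = n+4 from rfl, show n+2+1 = n+3 from rfl, show n+3+1 = n+4 from rfl, show n+3+2 = n+5 from rfl, show n+4+1 = n+5 from rfl] at r3 r4 r5 ⊢
    simp only [r5, r4, r3]
    generalize Hpoly (n+1) t = A
    generalize Hpoly (n+1) z = B
    generalize Hpoly (n+2) t = C
    generalize Hpoly (n+2) z = D
    generalize ((n+1).factorial : ℂ) = F at *
    push_cast
    simp only [show (n:ℂ)+4+1 = n+5 by ring, show (n:ℂ)+1+1 = n+2 by ring, show (n:ℂ)+2+1 = n+3 by ring, show (n:ℂ)+3+1 = n+4 by ring, pow_add]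
    generalize (n:ℂ) = N at *
    field_simp
    ring

noncomputable def M (s p x : ℂ) : ℂ :=
  (1 - x^2) ^ (-(1/2) : ℂ) * Complex.exp ((-x^2 * s + 2 * x * p) / (1 - x^2))

lemma slit {x : ℂ} (hx : ‖x‖ < 1) : 1 - x^2 ∈ Complex.slitPlane := by
  left
  have : ‖x^2‖ < 1 := by rw [norm_pow]; exact pow_lt_one₀ (norm_nonneg _) hx two_ne_zero
  have := (Complex.re_le_norm (x^2)).trans_lt this
  simp only [Complex.sub_re, Complex.one_re]; linarith

lemma Mder (s p : ℂ) {x : ℂ} (hx : ‖x‖ < 1) : HasDerivAt (M s p)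
    (M s p x * ((x * (1-x^2) - 2*x*s + 2*p + 2*p*x^2) / (1-x^2)^2)) x := by
  have hs := slit hx
  have h0 := Complex.slitPlane_ne_zero hs
  have d1 : HasDerivAt (fun x : ℂ => 1 - x^2) (-2*x) x := by
    convert! (hasDerivAt_pow 2 x).const_sub 1 using 1; simp
  have d2 : HasDerivAt (fun x : ℂ => -x^2 * s + 2 * x * p) (-2*x*s+2*p) x := by
    convert! ((hasDerivAt_pow 2 x).neg.mul_const s).add (((hasDerivAt_id x).const_mul 2).mul_const p) using 1
    simp
  have d3 := (d1.cpow_const (c := -(1/2)) hs).mul (d2.div d1 h0).cexp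
  refine d3.congr_deriv ?_
  rw [Complex.cpow_sub _ _ h0, Complex.cpow_one, M, Pi.div_apply]
  field_simp
  ring

lemma Mrec (s p : ℂ) : Rec s p (fun n => iteratedDeriv n (M s p) 0 / n.factorial) := by
  have dM : DifferentiableOn ℂ (M s p) (Metric.ball 0 1) := fun x hx =>
    (Mder s p (by simpa using hx)).differentiableAt.differentiableWithinAt
  have dM' := dM.deriv Metric.isOpen_ball
  have a := Ser.taylor dM
  have d := Ser.taylor dM'
  have e : (fun n : ℕ => iteratedDeriv n (deriv (M s p)) 0 / n.factorial) =
      (fun n : ℕ => ((n:ℂ)+1) * (iteratedDeriv (n+1) (M s p) 0 / (n+1).factorial)) := by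
    funext n
    have : (n:ℂ)+1 ≠ 0 := by exact_mod_cast Nat.succ_ne_zero n
    rw [← iteratedDeriv_succ', Nat.factorial_succ]; push_cast
    field_simp
  rw [e] at d
  have tot := (((((d.add (d.sh.sh.mul (-2))).add d.sh.sh.sh.sh).add (a.sh.mul (2*s-1))).add a.sh.sh.sh).add (a.mul (-2*p))).add (a.sh.sh.mul (-2*p))
  refine tot.zero ?_
  intro x hx
  have h0 := Complex.slitPlane_ne_zero (slit hx)
  rw [(Mder s p hx).deriv]
  field_simp
  ring

/-- Mehler's formula for Hermite polynomials, extended to the complex plane. -/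
theorem statement5 (l : ℝ) (hl0 : 0 < l) (hl1 : l < 1) (t z : ℂ) :
    HasSum (fun m : ℕ => ((l : ℂ) ^ m / ((2 : ℂ) ^ m * m.factorial)) * Hpoly m t * Hpoly m z)
      ((1 / (Real.sqrt (1 - l ^ 2)) : ℂ) *
        Complex.exp ((-(l : ℂ) ^ 2 * (t ^ 2 + z ^ 2) + 2 * (l : ℂ) * t * z)
          / (1 - (l : ℂ) ^ 2))) := by
  have hx : ‖(l:ℂ)‖ < 1 := by
    rw [Complex.norm_real, Real.norm_of_nonneg hl0.le]; exact hl1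
  have dM : DifferentiableOn ℂ (M (t^2+z^2) (t*z)) (Metric.ball 0 1) := fun x hx =>
    (Mder _ _ (by simpa using hx)).differentiableAt.differentiableWithinAt
  have h := Ser.taylor dM l hx
  have hc := Rec.unique (Mrec (t^2+z^2) (t*z)) (crec t z) (by simp [M, H0])
  have hpos : 0 < 1 - l^2 := by nlinarith
  convert h using 1
  · funext m
    beta_reduce
    rw [hc m]; ring
  · rw [M]
    congr 1
    · rw [Real.sqrt_eq_rpow, Complex.cpow_neg, Complex.ofReal_cpow hpos.le]
      push_cast
      rw [one_div]
    · congr 2; ring
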